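/- Thomson's principle (uniqueness of the minimizer): Let G=(V,E) be a finite network with positive conductances and let a ≠ z be vertices. Then there exists a unique flow I from a to z of strength 1 whose energy equals R_eff(a↔z) = inf{ E(θ) : θ a flow from a to z of strength 1 }; moreover every flow θ from a to z of strength 1 with θ ≠ I satisfies E(θ) > E(I), and I satisfies the cycle law. -/

import Mathlib

/-!
Thomson's principle: uniqueness of the energy-minimizing unit flow.

The finite network is a finite connected simple graph `G` with symmetric
conductances `c : V → V → ℝ`, positive on edges (and, by convention, zero on
non-adjacent pairs); resistances are `(c x y)⁻¹`.  A flow from `a` to `z` is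
an antisymmetric function `θ : V → V → ℝ` vanishing on non-adjacent pairs and
satisfying the node law away from `a, z`; since `θ` vanishes off edges, sums
over all vertices agree with sums over neighbours, and the energy
`∑_{e={x,y}∈E} r_e θ(x,y)²` equals `(1/2) * ∑ x, ∑ y, θ x y ^ 2 / c x y`.

A directed cycle is a closed walk `γ 0, γ 1, …, γ n = γ 0` with consecutive
vertices adjacent; `θ` satisfies the cycle law when
`∑ i < n, r_{γ i, γ (i+1)} θ(γ i, γ (i+1)) = 0` along every directed cycle.
-/

open Finset

variable {V : Type} [Fintype V] [DecidableEq V]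

/-- `θ` is a flow of strength 1 from `a` to `z` in `G`. -/
def IsUnitFlow (G : SimpleGraph V) (a z : V) (θ : V → V → ℝ) : Prop :=
  (∀ x y, θ x y = -θ y x) ∧
  (∀ x y, ¬G.Adj x y → θ x y = 0) ∧
  (∀ x, x ≠ a → x ≠ z → ∑ y, θ x y = 0) ∧
  (∑ y, θ a y = 1)

/-- The energy of a flow with respect to conductances `c`. -/
noncomputable def flowEnergy (c : V → V → ℝ) (θ : V → V → ℝ) : ℝ :=
  (1 / 2) * ∑ x, ∑ y, θ x y ^ 2 / c x y

/-- `θ` satisfies the cycle law: along every directed cycle the sum of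
`r_e θ(e⃗) = θ(e⃗)/c_e` vanishes. -/
def CycleLaw (G : SimpleGraph V) (c : V → V → ℝ) (θ : V → V → ℝ) : Prop :=
  ∀ (n : ℕ) (γ : ℕ → V), (∀ i < n, G.Adj (γ i) (γ (i + 1))) → γ n = γ 0 →
    ∑ i ∈ Finset.range n, θ (γ i) (γ (i + 1)) / c (γ i) (γ (i + 1)) = 0

/-- Summation by parts for an antisymmetric function. -/
lemma sum_by_parts (h : V → ℝ) (D : V → V → ℝ) (hD : ∀ x y, D x y = -D y x) :
    ∑ x, ∑ y, (h x - h y) * D x y = 2 * ∑ x, h x * ∑ y, D x y := by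
  have h1 : ∑ x, ∑ y, h y * D x y = - ∑ x, ∑ y, h x * D x y := by
    rw [Finset.sum_comm, ← Finset.sum_neg_distrib]
    refine Finset.sum_congr rfl fun x _ => ?_
    rw [← Finset.sum_neg_distrib]
    refine Finset.sum_congr rfl fun y _ => ?_
    rw [hD y x]; ring
  simp only [sub_mul, Finset.sum_sub_distrib, h1, Finset.mul_sum]
  simp only [← Finset.mul_sum]
  ring

/-- Existence of a grounded potential. -/
lemma exists_potential (G : SimpleGraph V) (hG : G.Connected)
    (w : V → V → ℝ) (hsymm : ∀ x y, w x y = w y x)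
    (hpos : ∀ x y, G.Adj x y → 0 < w x y) (hnn : ∀ x y, 0 ≤ w x y)
    (a z : V) (haz : a ≠ z) :
    ∃ h : V → ℝ, h z = 0 ∧ ∀ x, x ≠ z →
      ∑ y, w x y * (h x - h y) = if x = a then 1 else 0 := by
  let L : (V → ℝ) →ₗ[ℝ] (V → ℝ) :=
    { toFun := fun h x => if x = z then h z else ∑ y, w x y * (h x - h y)
      map_add' := by
        intro f g
        ext x
        by_cases hx : x = z
        · simp [hx]
        · simp only [hx, if_false, Pi.add_apply, ← Finset.sum_add_distrib]
          exact Finset.sum_congr rfl fun y _ => by ring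
      map_smul' := by
        intro r f
        ext x
        by_cases hx : x = z
        · simp [hx]
        · simp only [hx, if_false, Pi.smul_apply, smul_eq_mul, RingHom.id_apply, Finset.mul_sum]
          exact Finset.sum_congr rfl fun y _ => by ring }
  have hL : ∀ h x, L h x = if x = z then h z else ∑ y, w x y * (h x - h y) := fun _ _ => rfl
  have hinj : Function.Injective L := by
    rw [injective_iff_map_eq_zero]
    intro h hh
    have hz : h z = 0 := by
      have := congrFun hh z
      simpa [hL] using this
    have hx : ∀ x, x ≠ z → ∑ y, w x y * (h x - h y) = 0 := by
      intro x hx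
      have := congrFun hh x
      simpa [hL, hx] using this
    have h0 : ∑ x, ∑ y, (h x - h y) * (w x y * (h x - h y)) = 0 := by
      rw [sum_by_parts h (fun x y => w x y * (h x - h y))
        (fun x y => by rw [hsymm x y]; ring)]
      rw [Finset.sum_eq_zero, mul_zero]
      intro x _
      by_cases hxz : x = z
      · rw [hxz, hz, zero_mul]
      · rw [hx x hxz, mul_zero]
    have hterm : ∀ x y, 0 ≤ (h x - h y) * (w x y * (h x - h y)) := fun x y => by
      nlinarith [mul_nonneg (hnn x y) (sq_nonneg (h x - h y))]
    have hadj : ∀ x y, G.Adj x y → h x = h y := by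
      intro x y hxy
      have h1 := (Finset.sum_eq_zero_iff_of_nonneg
        (fun x _ => Finset.sum_nonneg fun y _ => hterm x y)).1 h0 x (Finset.mem_univ x)
      have h2 := (Finset.sum_eq_zero_iff_of_nonneg
        (fun y _ => hterm x y)).1 h1 y (Finset.mem_univ y)
      have h3 := hpos x y hxy
      have h4 : h x - h y = 0 := by
        rcases mul_eq_zero.1 h2 with h5 | h5
        · exact h5
        · rcases mul_eq_zero.1 h5 with h6 | h6
          · exact absurd h6 h3.ne'
          · exact h6
      linarith
    have hwalk : ∀ x y, G.Walk x y → h x = h y := by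
      intro x y p
      induction p with
      | nil => rfl
      | cons hxy _ ih => exact (hadj _ _ hxy).trans ih
    ext x
    obtain ⟨p⟩ := hG.preconnected x z
    rw [hwalk x z p, hz]; rfl
  have hsurj : Function.Surjective L := LinearMap.injective_iff_surjective.1 hinj
  obtain ⟨h, hh⟩ := hsurj (fun x => if x = a then 1 else 0)
  refine ⟨h, ?_, ?_⟩
  · have := congrFun hh z
    simpa [hL, haz.symm] using this
  · intro x hx
    have := congrFun hh x
    simpa [hL, hx] using this

/-- **Thomson's principle (uniqueness of the minimizer)**: there is a unique
unit flow `I` from `a` to `z` whose energy equals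
`R_eff(a↔z) = inf {E(θ) : θ a unit flow from a to z}`; every other unit flow
has strictly larger energy, and `I` satisfies the cycle law. -/
theorem thomson_unique_minimizer (G : SimpleGraph V) (hG : G.Connected)
    (c : V → V → ℝ) (hsymm : ∀ x y, c x y = c y x)
    (hpos : ∀ x y, G.Adj x y → 0 < c x y)
    (a z : V) (haz : a ≠ z) :
    ∃ I : V → V → ℝ,
      IsUnitFlow G a z I ∧
      IsLeast {E : ℝ | ∃ θ : V → V → ℝ, IsUnitFlow G a z θ ∧ E = flowEnergy c θ}
        (flowEnergy c I) ∧
      (∀ θ : V → V → ℝ, IsUnitFlow G a z θ → θ ≠ I →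
        flowEnergy c I < flowEnergy c θ) ∧
      CycleLaw G c I := by
  classical
  obtain ⟨h, hz, hh⟩ := exists_potential G hG (fun x y => if G.Adj x y then c x y else 0)
    (fun x y => by simp only [G.adj_comm x y, hsymm x y])
    (fun x y hxy => by simpa [hxy] using hpos x y hxy)
    (fun x y => by
      by_cases hxy : G.Adj x y
      · simpa [hxy] using (hpos x y hxy).le
      · simp [hxy]) a z haz
  let I : V → V → ℝ := fun x y => (if G.Adj x y then c x y else 0) * (h x - h y)
  have hIadj : ∀ x y, G.Adj x y → I x y = c x y * (h x - h y) := fun x y hxy => by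
    simp [I, hxy]
  have hInadj : ∀ x y, ¬ G.Adj x y → I x y = 0 := fun x y hxy => by
    simp [I, hxy]
  have hI : IsUnitFlow G a z I := by
    refine ⟨fun x y => ?_, hInadj, fun x hxa hxz => ?_, ?_⟩
    · by_cases hxy : G.Adj x y
      · rw [hIadj x y hxy, hIadj y x hxy.symm, hsymm x y]; ring
      · rw [hInadj x y hxy, hInadj y x (fun h' => hxy h'.symm), neg_zero]
    · have := hh x hxz
      rw [if_neg hxa] at this
      exact this
    · have := hh a haz
      rw [if_pos rfl] at this
      exact this
  have hlt : ∀ θ : V → V → ℝ, IsUnitFlow G a z θ → θ ≠ I →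
      flowEnergy c I < flowEnergy c θ := by
    intro θ hθ hne
    obtain ⟨hθ1, hθ2, hθ3, hθ4⟩ := hθ
    obtain ⟨hI1, hI2, hI3, hI4⟩ := hI
    have hcross : ∑ x, ∑ y, (h x - h y) * (θ x y - I x y) = 0 := by
      rw [sum_by_parts h (fun x y => θ x y - I x y)
        (fun x y => by rw [hθ1 x y, hI1 x y]; ring)]
      rw [Finset.sum_eq_zero, mul_zero]
      intro x _
      rw [Finset.sum_sub_distrib]
      by_cases hxz : x = z
      · rw [hxz, hz, zero_mul]
      · by_cases hxa : x = a
        · rw [hxa, hθ4, hI4, sub_self, mul_zero]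
        · rw [hθ3 x hxa hxz, hI3 x hxa hxz, sub_self, mul_zero]
    have hexp : ∑ x, ∑ y, θ x y ^ 2 / c x y = ∑ x, ∑ y, I x y ^ 2 / c x y
        + 2 * ∑ x, ∑ y, (h x - h y) * (θ x y - I x y)
        + ∑ x, ∑ y, (θ x y - I x y) ^ 2 / c x y := by
      simp only [Finset.mul_sum, ← Finset.sum_add_distrib]
      refine Finset.sum_congr rfl fun x _ => Finset.sum_congr rfl fun y _ => ?_
      by_cases hxy : G.Adj x y
      · have := (hpos x y hxy).ne'
        rw [hIadj x y hxy]
        field_simp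
        ring
      · simp [hθ2 x y hxy, hI2 x y hxy]
    have hnn : ∀ x y, 0 ≤ (θ x y - I x y) ^ 2 / c x y := by
      intro x y
      by_cases hxy : G.Adj x y
      · exact div_nonneg (sq_nonneg _) (hpos x y hxy).le
      · simp [hθ2 x y hxy, hI2 x y hxy]
    have hposD : 0 < ∑ x, ∑ y, (θ x y - I x y) ^ 2 / c x y := by
      obtain ⟨x, hx⟩ := Function.ne_iff.1 hne
      obtain ⟨y, hxy⟩ := Function.ne_iff.1 hx
      have hadj : G.Adj x y := by
        by_contra hn
        exact hxy (by rw [hθ2 x y hn, hI2 x y hn])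
      refine Finset.sum_pos' (fun x _ => Finset.sum_nonneg fun y _ => hnn x y)
        ⟨x, Finset.mem_univ x, Finset.sum_pos' (fun y _ => hnn x y) ⟨y, Finset.mem_univ y, ?_⟩⟩
      have h1 : θ x y - I x y ≠ 0 := sub_ne_zero.2 hxy
      have h2 := hpos x y hadj
      positivity
    unfold flowEnergy
    rw [hexp, hcross]
    linarith
  refine ⟨I, hI, ⟨⟨I, hI, rfl⟩, ?_⟩, hlt, ?_⟩
  · rintro E ⟨θ, hθ, rfl⟩
    by_cases he : θ = I
    · rw [he]
    · exact (hlt θ hθ he).le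
  · intro n γ hγ hn
    have h1 : ∑ i ∈ Finset.range n, I (γ i) (γ (i + 1)) / c (γ i) (γ (i + 1))
        = ∑ i ∈ Finset.range n, (h (γ i) - h (γ (i + 1))) := by
      refine Finset.sum_congr rfl fun i hi => ?_
      have hadj := hγ i (Finset.mem_range.1 hi)
      rw [hIadj _ _ hadj, mul_div_cancel_left₀ _ (hpos _ _ hadj).ne']
    rw [h1, Finset.sum_range_sub' (fun i => h (γ i)), hn, sub_self]
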